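/- arXiv:2405.14961 — 5 statements merged into one kernel-verified Lean document; each statement's English description precedes it below -/
import Mathlib

section
/- One-step Gaussian propagation (core step of the forward-process property). Let a, b be real numbers with 0 < a ≤ b ≤ 1 and let x₀ ∈ ℝ. Then the measure obtained by first sampling y from gaussianReal (√b · x₀) (1 − b) and then sampling from gaussianReal (√(a/b) · y) (1 − a/b) — i.e. the bind (gaussianReal (√b·x₀) (1−b)).bind (fun y => gaussianReal (√(a/b)·y) (1 − a/b)) — equals gaussianReal (√a · x₀) (1 − a). -/
open MeasureTheory ProbabilityTheory

/-- One-step Gaussian propagation: sampling `y ~ N(√b·x₀, 1−b)` and then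
`z ~ N(√(a/b)·y, 1−a/b)` gives `z ~ N(√a·x₀, 1−a)`. -/
theorem one_step_gaussian_propagation (a b x₀ : ℝ) (ha : 0 < a) (hab : a ≤ b) (hb1 : b ≤ 1) :
    (gaussianReal (Real.sqrt b * x₀) ((1 - b).toNNReal)).bind
      (fun y => gaussianReal (Real.sqrt (a / b) * y) ((1 - a / b).toNNReal))
    = gaussianReal (Real.sqrt a * x₀) ((1 - a).toNNReal) := by
  have hb : 0 < b := ha.trans_le hab
  have hle : a / b ≤ 1 := (div_le_one hb).2 hab
  have key : gaussianReal (Real.sqrt a * x₀) ((1 - a).toNNReal)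
      = Measure.conv ((gaussianReal (Real.sqrt b * x₀) ((1 - b).toNNReal)).map
          (fun y => Real.sqrt (a / b) * y)) (gaussianReal 0 ((1 - a / b).toNNReal)) := by
    rw [gaussianReal_map_const_mul, gaussianReal_conv_gaussianReal]
    congr 1
    · rw [add_zero, ← mul_assoc, ← Real.sqrt_mul (by positivity), div_mul_cancel₀ _ hb.ne']
    · apply NNReal.eq
      push_cast
      rw [Real.coe_toNNReal _ (by linarith), Real.coe_toNNReal _ (by linarith),
        Real.coe_toNNReal _ (by linarith)]
      rw [Real.sq_sqrt (by positivity)]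
      field_simp
      ring
  have hm : Measurable (fun y => gaussianReal (Real.sqrt (a / b) * y) ((1 - a / b).toNNReal)) := by
    have h := measurable_gaussianReal
    exact h.comp (f := fun y : ℝ => (Real.sqrt (a / b) * y, (1 - a / b).toNNReal)) (by fun_prop)
  rw [key]
  refine Measure.ext_of_lintegral _ fun f hf => ?_
  rw [Measure.lintegral_bind hm.aemeasurable hf.aemeasurable, Measure.lintegral_conv hf,
    lintegral_map (by fun_prop) (by fun_prop)]
  refine lintegral_congr fun y => ?_
  rw [← lintegral_map (μ := gaussianReal 0 ((1 - a / b).toNNReal)) hf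
    (g := fun z => Real.sqrt (a / b) * y + z) (by fun_prop), gaussianReal_map_const_add, zero_add]
end

section
/- Marginal matching between student and teacher (Eq. (10) and the claim following Eq. (8) of the paper). Let α : ℕ → ℝ be an antitone sequence with α 0 = 1 and 0 < α t ≤ 1 for all t, let c ≥ 1 be a natural number, and let x₀ ∈ ℝ. Define the teacher marginals μ : ℕ → Measure ℝ by μ 0 = Dirac x₀ and μ s = (μ (s−1)).bind (fun x => gaussianReal (√(α s / α (s−1)) · x) (1 − α s / α (s−1))), and the student marginals ν : ℕ → Measure ℝ by ν 0 = Dirac x₀ and ν t = (ν (t−1)).bind (fun x => gaussianReal (√(α (c·t) / α (c·t − c)) · x) (1 − α (c·t) / α (c·t − c))). Then for every t, the student's t-step marginal equals the teacher's (c·t)-step marginal: ν t = μ (c·t). -/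
open MeasureTheory ProbabilityTheory
open scoped MeasureTheory

lemma bind_gauss (m a : ℝ) (v w : NNReal) :
    (gaussianReal m v).bind (fun x => gaussianReal (a * x) w)
      = gaussianReal (a * m) (NNReal.mk (a ^ 2) (sq_nonneg a) * v + w) := by
  have hmeas : Measurable (fun x : ℝ => gaussianReal (a * x) w) := by
    have h2 : Measurable (fun x : ℝ => (a * x, w)) := by fun_prop
    exact measurable_gaussianReal.comp h2
  have h1 : gaussianReal (a * m) (NNReal.mk (a ^ 2) (sq_nonneg a) * v + w)
      = (gaussianReal m v).map (a * ·) ∗ gaussianReal 0 w := by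
    rw [gaussianReal_map_const_mul, gaussianReal_conv_gaussianReal, add_zero]
  rw [h1]
  ext s hs
  rw [Measure.bind_apply hs hmeas.aemeasurable, ← lintegral_indicator_one hs,
    Measure.lintegral_conv (measurable_one.indicator hs), lintegral_map _ (by fun_prop)]
  · refine lintegral_congr fun x => ?_
    have h3 : gaussianReal (a * x) w = (gaussianReal 0 w).map (a * x + ·) := by
      rw [gaussianReal_map_const_add, zero_add]
    rw [h3, ← lintegral_indicator_one hs,
      lintegral_map (measurable_one.indicator hs) (by fun_prop)]
  · have : Measurable (fun p : ℝ × ℝ => s.indicator (1 : ℝ → ENNReal) (p.1 + p.2)) :=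
      (measurable_one.indicator hs).comp (by fun_prop)
    exact this.lintegral_prod_right'

lemma step_gauss (x₀ p q : ℝ) (hq : 0 < q) (hq1 : q ≤ 1) (hp : 0 < p) (hpq : p ≤ q) :
    (gaussianReal (Real.sqrt q * x₀) (1 - q).toNNReal).bind
      (fun x => gaussianReal (Real.sqrt (p / q) * x) (1 - p / q).toNNReal)
      = gaussianReal (Real.sqrt p * x₀) (1 - p).toNNReal := by
  have h : p / q ≤ 1 := (div_le_one hq).2 hpq
  rw [bind_gauss]
  congr 1
  · rw [← mul_assoc, ← Real.sqrt_mul (by positivity), div_mul_cancel₀ _ hq.ne']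
  · apply NNReal.coe_injective
    rw [NNReal.coe_add, NNReal.coe_mul, Real.coe_toNNReal _ (by linarith),
      Real.coe_toNNReal _ (by linarith), Real.coe_toNNReal _ (by linarith), NNReal.coe_mk,
      Real.sq_sqrt (by positivity)]
    field_simp
    ring



/-- Marginal matching between student and teacher (Eq. (10)): the student's `t`-step marginal
equals the teacher's `(c·t)`-step marginal. -/
theorem student_matches_teacher_marginal (α : ℕ → ℝ) (hanti : Antitone α) (hα0 : α 0 = 1)
    (hpos : ∀ t, 0 < α t) (hle : ∀ t, α t ≤ 1) (c : ℕ) (hc : 1 ≤ c) (x₀ : ℝ)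
    (μ : ℕ → Measure ℝ) (hμ0 : μ 0 = Measure.dirac x₀)
    (hμ : ∀ s, 1 ≤ s → μ s = (μ (s - 1)).bind
      (fun x => gaussianReal (Real.sqrt (α s / α (s - 1)) * x) ((1 - α s / α (s - 1)).toNNReal)))
    (ν : ℕ → Measure ℝ) (hν0 : ν 0 = Measure.dirac x₀)
    (hν : ∀ t, 1 ≤ t → ν t = (ν (t - 1)).bind
      (fun x => gaussianReal (Real.sqrt (α (c * t) / α (c * t - c)) * x)
        ((1 - α (c * t) / α (c * t - c)).toNNReal))) :
    ∀ t, ν t = μ (c * t) := by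
  have Hμ : ∀ s, μ s = gaussianReal (Real.sqrt (α s) * x₀) (1 - α s).toNNReal := by
    intro s
    induction s with
    | zero => simp [hμ0, hα0]
    | succ n ih =>
      rw [hμ (n + 1) (by omega), Nat.add_sub_cancel, ih]
      exact step_gauss x₀ _ _ (hpos _) (hle _) (hpos _) (hanti (by omega))
  intro t
  rw [Hμ]
  induction t with
  | zero => simp [hν0, hα0]
  | succ n ih =>
    rw [hν (n + 1) (by omega), Nat.add_sub_cancel, ih,
      show c * (n + 1) - c = c * n by rw [Nat.mul_succ, Nat.add_sub_cancel]]
    exact step_gauss x₀ _ _ (hpos _) (hle _) (hpos _) (hanti (by rw [Nat.mul_succ]; omega))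
end

section
/- Flexible sub-sequence distillation (Appendix A.4, Section 3.6 of the paper). Let α : ℕ → ℝ be an antitone sequence with α 0 = 1 and 0 < α t ≤ 1 for all t, let φ : ℕ → ℕ be strictly monotone with φ 0 = 0, and let x₀ ∈ ℝ. Define the teacher marginals μ : ℕ → Measure ℝ by μ 0 = Dirac x₀ and μ s = (μ (s−1)).bind (fun x => gaussianReal (√(α s / α (s−1)) · x) (1 − α s / α (s−1))), and the student marginals ν : ℕ → Measure ℝ by ν 0 = Dirac x₀ and ν t = (ν (t−1)).bind (fun x => gaussianReal (√(α (φ t) / α (φ (t−1))) · x) (1 − α (φ t) / α (φ (t−1)))). Then for every t, ν t = gaussianReal (√(α (φ t)) · x₀) (1 − α (φ t)), and consequently ν t = μ (φ t). -/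
open MeasureTheory ProbabilityTheory

lemma gaussian_bind_aux (m c : ℝ) (v w : NNReal) :
    (gaussianReal m v).bind (fun x => gaussianReal (c * x) w)
      = gaussianReal (c * m) (NNReal.mk (c ^ 2) (sq_nonneg c) * v + w) := by
  have hk : Measurable (fun x : ℝ => gaussianReal (c * x) w) :=
    measurable_gaussianReal.comp (f := fun x : ℝ => (c * x, w)) (by fun_prop)
  have h1 : gaussianReal (c * m) (NNReal.mk (c ^ 2) (sq_nonneg c) * v + w)
      = ((gaussianReal m v).map (c * ·)) ∗ gaussianReal 0 w := by
    rw [gaussianReal_map_const_mul, gaussianReal_conv_gaussianReal, add_zero]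
  rw [h1]
  ext s hs
  rw [Measure.bind_apply hs hk.aemeasurable, ← lintegral_indicator_one hs,
    Measure.lintegral_conv (measurable_one.indicator hs),
    lintegral_map (by
      apply Measurable.lintegral_prod_right'
        (f := fun p : ℝ × ℝ => s.indicator (1 : ℝ → ENNReal) (p.1 + p.2))
      exact (measurable_one.indicator hs).comp (by fun_prop)) (by fun_prop)]
  congr 1
  ext x
  have h2 : gaussianReal (c * x) w = (gaussianReal 0 w).map ((c * x) + ·) := by
    rw [gaussianReal_map_const_add, zero_add]
  rw [h2, ← lintegral_indicator_one hs,
    lintegral_map (measurable_one.indicator hs) (by fun_prop)]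

lemma gaussian_step_aux (a b x₀ : ℝ) (hb : 0 < b) (hb1 : b ≤ 1) (ha : 0 < a) (hab : a ≤ b) :
    (gaussianReal (Real.sqrt b * x₀) (1 - b).toNNReal).bind
      (fun x => gaussianReal (Real.sqrt (a / b) * x) ((1 - a / b).toNNReal))
      = gaussianReal (Real.sqrt a * x₀) (1 - a).toNNReal := by
  rw [gaussian_bind_aux]
  have h1 : a / b ≤ 1 := (div_le_one hb).2 hab
  congr 1
  · rw [← mul_assoc, ← Real.sqrt_mul (by positivity), div_mul_cancel₀ _ hb.ne']
  · ext
    rw [NNReal.coe_add, NNReal.coe_mul]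
    rw [Real.coe_toNNReal _ (by linarith), Real.coe_toNNReal _ (by linarith),
      Real.coe_toNNReal _ (by linarith)]
    change Real.sqrt (a / b) ^ 2 * (1 - b) + (1 - a / b) = 1 - a
    rw [Real.sq_sqrt (by positivity)]
    field_simp
    ring

lemma gaussian_chain_aux (β : ℕ → ℝ) (hanti : Antitone β) (h0 : β 0 = 1)
    (hpos : ∀ t, 0 < β t) (hle : ∀ t, β t ≤ 1) (x₀ : ℝ)
    (μ : ℕ → Measure ℝ) (hμ0 : μ 0 = Measure.dirac x₀)
    (hμ : ∀ s, 1 ≤ s → μ s = (μ (s - 1)).bind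
      (fun x => gaussianReal (Real.sqrt (β s / β (s - 1)) * x) ((1 - β s / β (s - 1)).toNNReal))) :
    ∀ t, μ t = gaussianReal (Real.sqrt (β t) * x₀) ((1 - β t).toNNReal) := by
  intro t
  induction t with
  | zero => simp [hμ0, h0]
  | succ n ih =>
    rw [hμ (n + 1) (by omega), Nat.add_sub_cancel, ih]
    exact gaussian_step_aux _ _ _ (hpos n) (hle n) (hpos _) (hanti (Nat.le_succ n))

/-- Flexible sub-sequence distillation (Appendix A.4): for any strictly increasing sub-sequence
`φ` of step indices with `φ 0 = 0`, the student's `t`-step marginal is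
`N(√(α (φ t))·x₀, 1 − α (φ t))`, hence equals the teacher's `(φ t)`-step marginal. -/
theorem flexible_subsequence_distillation (α : ℕ → ℝ) (hanti : Antitone α) (hα0 : α 0 = 1)
    (hpos : ∀ t, 0 < α t) (hle : ∀ t, α t ≤ 1)
    (φ : ℕ → ℕ) (hφ : StrictMono φ) (hφ0 : φ 0 = 0) (x₀ : ℝ)
    (μ : ℕ → Measure ℝ) (hμ0 : μ 0 = Measure.dirac x₀)
    (hμ : ∀ s, 1 ≤ s → μ s = (μ (s - 1)).bind
      (fun x => gaussianReal (Real.sqrt (α s / α (s - 1)) * x) ((1 - α s / α (s - 1)).toNNReal)))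
    (ν : ℕ → Measure ℝ) (hν0 : ν 0 = Measure.dirac x₀)
    (hν : ∀ t, 1 ≤ t → ν t = (ν (t - 1)).bind
      (fun x => gaussianReal (Real.sqrt (α (φ t) / α (φ (t - 1))) * x)
        ((1 - α (φ t) / α (φ (t - 1))).toNNReal))) :
    ∀ t, ν t = gaussianReal (Real.sqrt (α (φ t)) * x₀) ((1 - α (φ t)).toNNReal)
      ∧ ν t = μ (φ t) := by

  intro t
  have h1 := gaussian_chain_aux (fun t => α (φ t)) (hanti.comp_monotone hφ.monotone)
    (by simp [hφ0, hα0]) (fun t => hpos _) (fun t => hle _) x₀ ν hν0 hν t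
  have h2 := gaussian_chain_aux α hanti hα0 hpos hle x₀ μ hμ0 hμ (φ t)
  exact ⟨h1, h1.trans h2.symm⟩
end

section
/- Joint-law factorization of two consecutive student steps through the posterior. Let a, b be real numbers with 0 < a < b < 1 and x₀ ∈ ℝ. Set σ' = (1−b)(b−a)/((1−a)·b) and, for z ∈ ℝ, m z = ((1−b)·√a/((1−a)·√b))·z + ((b−a)/((1−a)·√b))·x₀. Then the following two measures on ℝ × ℝ are equal: (i) (gaussianReal (√b·x₀) (1−b)).bind (fun y => (gaussianReal (√(a/b)·y) (1 − a/b)).map (fun z => (y, z))), and (ii) (gaussianReal (√a·x₀) (1−a)).bind (fun z => (gaussianReal (m z) σ').map (fun y => (y, z))). -/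
open MeasureTheory ProbabilityTheory

lemma aux_bind (μ : ℝ) {v w : NNReal} (hv : v ≠ 0) (hw : w ≠ 0) (m : ℝ → ℝ) (hm : Measurable m)
    (f : ℝ → ℝ → ℝ × ℝ) (hf : Measurable (Function.uncurry f)) (s : Set (ℝ × ℝ))
    (hs : MeasurableSet s) :
    (gaussianReal μ v).bind (fun y => (gaussianReal (m y) w).map (f y)) s
      = ∫⁻ y, ∫⁻ z, gaussianPDF μ v y * (gaussianPDF (m y) w z * s.indicator 1 (f y z)) := by
  have hpdf : Measurable (fun p : ℝ × ℝ => gaussianPDF (m p.1) w p.2) :=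
    measurable_uncurry_gaussianPDF.comp
      ((hm.comp measurable_fst).prodMk (measurable_const.prodMk measurable_snd))
  have hmeas : ∀ t : Set (ℝ × ℝ), MeasurableSet t → Measurable
      (fun p : ℝ × ℝ => gaussianPDF (m p.1) w p.2 * t.indicator (1 : ℝ × ℝ → ENNReal) (f p.1 p.2)) :=
    fun t ht => hpdf.mul ((measurable_one.indicator ht).comp hf)
  have hfy : ∀ y, Measurable (f y) := fun y => hf.comp measurable_prodMk_left
  have key : ∀ t : Set (ℝ × ℝ), MeasurableSet t → ∀ y,
      (gaussianReal (m y) w).map (f y) t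
        = ∫⁻ z, gaussianPDF (m y) w z * t.indicator 1 (f y z) := by
    intro t ht y
    rw [← lintegral_indicator_one ht, lintegral_map (measurable_one.indicator ht) (hfy y),
      gaussianReal_of_var_ne_zero _ hw]
    exact lintegral_withDensity_eq_lintegral_mul _
        (measurable_gaussianPDF _ _) ((measurable_one.indicator ht).comp (hfy y))
  have hk : Measurable (fun y => (gaussianReal (m y) w).map (f y)) := by
    refine Measure.measurable_of_measurable_coe _ fun t ht => ?_
    simp_rw [key t ht]
    exact (hmeas t ht).lintegral_prod_right'
  rw [Measure.bind_apply hs hk.aemeasurable]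
  simp_rw [key s hs]
  rw [gaussianReal_of_var_ne_zero _ hv, lintegral_withDensity_eq_lintegral_mul _
        (measurable_gaussianPDF _ _) (hmeas s hs).lintegral_prod_right']
  refine lintegral_congr fun y => ?_
  exact (lintegral_const_mul _ ((hmeas s hs).comp measurable_prodMk_left)).symm

lemma aux_pdf (a b x₀ : ℝ) (ha : 0 < a) (hab : a < b) (hb : b < 1) (y z : ℝ) :
    gaussianPDFReal (Real.sqrt b * x₀) ((1 - b).toNNReal) y *
      gaussianPDFReal (Real.sqrt (a / b) * y) ((1 - a / b).toNNReal) z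
    = gaussianPDFReal (Real.sqrt a * x₀) ((1 - a).toNNReal) z *
      gaussianPDFReal (((1 - b) * Real.sqrt a / ((1 - a) * Real.sqrt b)) * z
            + ((b - a) / ((1 - a) * Real.sqrt b)) * x₀)
          (((1 - b) * (b - a) / ((1 - a) * b)).toNNReal) y := by
  have hb0 : 0 < b := ha.trans hab
  have h1 : 0 < 1 - b := by linarith
  have h2 : 0 < 1 - a := by linarith
  have h3 : 0 < b - a := by linarith
  have h4 : 1 - a / b = (b - a) / b := by field_simp
  rw [Real.sqrt_div ha.le, h4]
  simp only [gaussianPDFReal]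
  rw [Real.coe_toNNReal _ h1.le, Real.coe_toNNReal _ h2.le, Real.coe_toNNReal _ (by positivity),
    Real.coe_toNNReal _ (by positivity)]
  have gen : ∀ s t e g : ℝ, (s⁻¹ * Real.exp e) * (t⁻¹ * Real.exp g)
      = (s * t)⁻¹ * Real.exp (e + g) := by
    intro s t e g
    rw [Real.exp_add, mul_inv]; ring
  rw [gen, gen,
    ← Real.sqrt_mul (by positivity), ← Real.sqrt_mul (by positivity)]
  congr 1
  · congr 2
    field_simp
  · congr 1
    obtain ⟨p, hp, rfl⟩ : ∃ p, 0 < p ∧ a = p ^ 2 :=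
      ⟨√a, Real.sqrt_pos.2 ha, (Real.sq_sqrt ha.le).symm⟩
    obtain ⟨q, hq, rfl⟩ : ∃ q, 0 < q ∧ b = q ^ 2 :=
      ⟨√b, Real.sqrt_pos.2 hb0, (Real.sq_sqrt hb0.le).symm⟩
    rw [Real.sqrt_sq hp.le, Real.sqrt_sq hq.le]
    generalize hA : 1 - p ^ 2 = A at *
    generalize hB : 1 - q ^ 2 = B at *
    generalize hC : q ^ 2 - p ^ 2 = C at *
    have : A ≠ 0 := h2.ne'
    have : B ≠ 0 := h1.ne'
    have : C ≠ 0 := h3.ne'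
    field_simp
    subst hA hB hC
    ring

/-- Joint-law factorization of two consecutive student steps through the posterior:
sampling `y ~ N(√b·x₀, 1−b)` then `z ~ N(√(a/b)·y, 1−a/b)` gives the same joint law of
`(y, z)` as sampling `z ~ N(√a·x₀, 1−a)` then `y ~ N(m z, σ')`. -/
theorem student_joint_law_factorization (a b x₀ : ℝ) (ha : 0 < a) (hab : a < b) (hb : b < 1) :
    (gaussianReal (Real.sqrt b * x₀) ((1 - b).toNNReal)).bind
      (fun y => (gaussianReal (Real.sqrt (a / b) * y) ((1 - a / b).toNNReal)).map
        (fun z => (y, z)))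
    = (gaussianReal (Real.sqrt a * x₀) ((1 - a).toNNReal)).bind
      (fun z => (gaussianReal
          (((1 - b) * Real.sqrt a / ((1 - a) * Real.sqrt b)) * z
            + ((b - a) / ((1 - a) * Real.sqrt b)) * x₀)
          (((1 - b) * (b - a) / ((1 - a) * b)).toNNReal)).map
        (fun y => (y, z))) := by
  have hb0 : 0 < b := ha.trans hab
  have h1 : 0 < 1 - b := by linarith
  have h2 : 0 < 1 - a := by linarith
  have h3 : 0 < b - a := by linarith
  have h4 : 0 < 1 - a / b := by rw [sub_pos, div_lt_one hb0]; exact hab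
  have h5 : 0 < (1 - b) * (b - a) / ((1 - a) * b) := by positivity
  ext s hs
  rw [aux_bind _ (Real.toNNReal_pos.2 h1).ne' (Real.toNNReal_pos.2 h4).ne'
      (fun y => Real.sqrt (a / b) * y) (by fun_prop) (fun y z => (y, z)) measurable_id s hs,
    aux_bind _ (Real.toNNReal_pos.2 h2).ne' (Real.toNNReal_pos.2 h5).ne'
      (fun z => ((1 - b) * Real.sqrt a / ((1 - a) * Real.sqrt b)) * z
            + ((b - a) / ((1 - a) * Real.sqrt b)) * x₀) (by fun_prop)
      (fun z y => (y, z)) measurable_swap s hs, lintegral_lintegral_swap]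
  · refine lintegral_congr fun z => lintegral_congr fun y => ?_
    rw [← mul_assoc, ← mul_assoc]
    congr 1
    simp only [gaussianPDF]
    rw [← ENNReal.ofReal_mul (gaussianPDFReal_nonneg _ _ _),
      ← ENNReal.ofReal_mul (gaussianPDFReal_nonneg _ _ _), aux_pdf a b x₀ ha hab hb]
  · refine Measurable.aemeasurable ?_
    refine ((measurable_gaussianPDF _ _).comp measurable_fst).mul
      (Measurable.mul ?_ (measurable_one.indicator hs))
    exact measurable_uncurry_gaussianPDF.comp
      ((measurable_fst.const_mul _).prodMk (measurable_const.prodMk measurable_snd))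
end

section
/- Per-step KL between the forward posterior and the parameterized reverse step equals the weighted noise-prediction error (combining Eqs. (9), (12)–(14) with Appendix A.3). Let a, b be real numbers with 0 < a < b < 1 and let x₀, ε, ε̂ ∈ ℝ. Set x = √a·x₀ + √(1−a)·ε, f = (x − √(1−a)·ε̂)/√a, μ̃ = ((1−b)·√a/((1−a)·√b))·x + ((b−a)/((1−a)·√b))·x₀, μ = ((1−b)·√a/((1−a)·√b))·x + ((b−a)/((1−a)·√b))·f, and σ' = (1−b)(b−a)/((1−a)·b). Then klDiv (gaussianReal μ̃ σ') (gaussianReal μ σ') = ENNReal.ofReal (((b−a)/(2·a·(1−b))) · (ε − ε̂)²). -/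
open MeasureTheory ProbabilityTheory
open scoped ENNReal NNReal Classical

/-- Kullback–Leibler divergence `∫ log (dμ/dν) dμ`, valued in `ℝ≥0∞` (it is `∞` when `μ` is not
absolutely continuous w.r.t. `ν` or when the log-likelihood ratio is not integrable). -/
noncomputable def klDiv {α : Type*} [MeasurableSpace α] (μ ν : Measure α) : ℝ≥0∞ :=
  if μ ≪ ν ∧ Integrable (llr μ ν) μ then ENNReal.ofReal (∫ x, llr μ ν x ∂μ) else ∞

lemma llr_gauss_aux (m n : ℝ) (v : ℝ≥0) (hv : v ≠ 0) :
    llr (gaussianReal m v) (gaussianReal n v) =ᵐ[gaussianReal m v]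
      fun x => ((m - n) / v) * x + (n ^ 2 - m ^ 2) / (2 * v) := by
  have h1 := gaussianReal_absolutelyContinuous m hv
  have h2 := gaussianReal_absolutelyContinuous n hv
  have h3 := gaussianReal_absolutelyContinuous' n hv
  have h := h1.ae_le (h3.ae_le (Measure.rnDeriv_eq_div h1 h2))
  filter_upwards [h, h1.ae_le (rnDeriv_gaussianReal m v), h1.ae_le (rnDeriv_gaussianReal n v)]
    with x hx hm hn
  have hv' : (0 : ℝ) < v := by positivity
  rw [llr, hx, hm, hn, ENNReal.toReal_div, toReal_gaussianPDF, toReal_gaussianPDF,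
    Real.log_div (gaussianPDFReal_pos _ _ _ hv).ne' (gaussianPDFReal_pos _ _ _ hv).ne']
  simp only [gaussianPDFReal]
  rw [Real.log_mul (by positivity) (by positivity), Real.log_mul (by positivity) (by positivity),
    Real.log_exp, Real.log_exp]
  field_simp
  ring

lemma klDiv_gauss_aux (m n : ℝ) (v : ℝ≥0) (hv : v ≠ 0) :
    klDiv (gaussianReal m v) (gaussianReal n v) = ENNReal.ofReal ((m - n) ^ 2 / (2 * v)) := by
  have hl := llr_gauss_aux m n v hv
  have hi : Integrable (fun x : ℝ => x) (gaussianReal m v) :=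
    (memLp_id_gaussianReal (μ := m) (v := v) 1).integrable (by simp)
  have hv' : (0 : ℝ) < v := by positivity
  rw [klDiv, if_pos]
  · rw [integral_congr_ae hl, integral_add (hi.const_mul _) (integrable_const _),
      integral_const_mul, integral_id_gaussianReal]
    congr 1
    simp
    field_simp
    ring
  · refine ⟨(gaussianReal_absolutelyContinuous m hv).trans
      (gaussianReal_absolutelyContinuous' n hv), ?_⟩
    rw [integrable_congr hl]
    exact (hi.const_mul _).add (integrable_const _)

/-- Per-step KL between the forward posterior `q'(x'_{t−1} | x'_t, x'_0) = N(μ̃, σ')` and the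
parameterized reverse step `p'_Θ(x'_{t−1} | x'_t) = N(μ, σ')` equals the weighted
noise-prediction error `((b−a)/(2a(1−b))) · (ε − ε̂)²`. -/
theorem klDiv_posterior_reverse_eq_noise_loss (a b x₀ ε εhat : ℝ)
    (ha : 0 < a) (hab : a < b) (hb : b < 1) :
    let x := Real.sqrt a * x₀ + Real.sqrt (1 - a) * ε
    let f := (x - Real.sqrt (1 - a) * εhat) / Real.sqrt a
    let μtilde := ((1 - b) * Real.sqrt a / ((1 - a) * Real.sqrt b)) * x
      + ((b - a) / ((1 - a) * Real.sqrt b)) * x₀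
    let μ := ((1 - b) * Real.sqrt a / ((1 - a) * Real.sqrt b)) * x
      + ((b - a) / ((1 - a) * Real.sqrt b)) * f
    let σ' := (1 - b) * (b - a) / ((1 - a) * b)
    klDiv (gaussianReal μtilde σ'.toNNReal) (gaussianReal μ σ'.toNNReal)
      = ENNReal.ofReal (((b - a) / (2 * a * (1 - b))) * (ε - εhat) ^ 2) := by

  intro x f μtilde μ σ'
  have h1a : 0 < 1 - a := by linarith
  have h1b : 0 < 1 - b := by linarith
  have hba : 0 < b - a := by linarith
  have hb0 : 0 < b := by linarith
  have hσ : 0 < σ' := by positivity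
  rw [klDiv_gauss_aux _ _ _ (by simpa using hσ), Real.coe_toNNReal _ hσ.le]
  congr 1
  have hsa : 0 < Real.sqrt a := Real.sqrt_pos.2 ha
  have hf : x₀ - f = - (Real.sqrt (1 - a) * (ε - εhat)) / Real.sqrt a := by
    simp only [f, x]
    field_simp
    ring
  have hd : μtilde - μ = ((b - a) / ((1 - a) * Real.sqrt b)) * (x₀ - f) := by
    simp only [μtilde, μ]
    ring
  rw [hd, hf, mul_pow, div_pow, div_pow, neg_sq, mul_pow, mul_pow, Real.sq_sqrt ha.le,
    Real.sq_sqrt h1a.le, Real.sq_sqrt hb0.le]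
  simp only [σ']
  field_simp
end
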